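/- Assume conditions (Cond1) and (CondAttr2): ω₁ < π². Then the union ∪_{t∈ℝ} 𝒜(t) of the sections of the pullback attractor of the multivalued process U generated by problem (Incl) is relatively compact in V^{2r} for every 0 ≤ r < 1. -/

import Mathlib

open MeasureTheory Set

noncomputable section

/-- Lebesgue measure restricted to the spatial interval `(0,1)`. -/
def μ01 : Measure ℝ := volume.restrict (Ioo (0:ℝ) 1)

/-- `H = L²(0,1)`. -/
abbrev Hsp : Type := Lp ℝ 2 μ01

/-- The Heaviside multifunction. -/
def heaviside (s : ℝ) : Set ℝ :=
  if s < 0 then {-1} else if s = 0 then Icc (-1) 1 else {1}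

/-- Condition (Cond1). -/
structure Cond1 (b ω : ℝ → ℝ) (b0 b1 ω0 ω1 : ℝ) : Prop where
  contb : Continuous b
  contω : Continuous ω
  b0pos : 0 < b0
  blb : ∀ t, b0 ≤ b t
  bub : ∀ t, b t ≤ b1
  ω0nonneg : 0 ≤ ω0
  ωlb : ∀ t, ω0 ≤ ω t
  ωub : ∀ t, ω t ≤ ω1

/-- `v ∈ H²(0,1) ∩ H¹₀(0,1)` with (weak) second derivative `w ∈ L²(0,1)`:
`v` has a representative that is continuous on `[0,1]`, vanishes at the boundary,
is differentiable on `(0,1)` and whose derivative is an antiderivative of `w`. -/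
def InDomainA (v w : Hsp) : Prop :=
  ∃ vt : ℝ → ℝ, ContinuousOn vt (Icc 0 1) ∧ vt 0 = 0 ∧ vt 1 = 0 ∧
    (∀ᵐ x ∂μ01, vt x = v x) ∧
    ∃ g : ℝ → ℝ,
      (∀ x ∈ Ioo (0:ℝ) 1, HasDerivAt vt (g x) x) ∧
      ∀ x ∈ Ioo (0:ℝ) 1, ∀ y ∈ Ioo (0:ℝ) 1, g x - g y = ∫ z in y..x, w z

/-- A strong solution of the inclusion on `[τ,∞)`, with explicit data:
`r` is the `L²`-selection, `u'` the time derivative, `uxx` the second spatial derivative. -/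
structure IsStrongSolutionWith (b ω : ℝ → ℝ) (τ : ℝ) (u r u' uxx : ℝ → Hsp) : Prop where
  cont : ContinuousOn u (Ici τ)
  rmem : ∀ T, τ < T → MemLp r 2 (volume.restrict (Ioo τ T))
  sel : ∀ᵐ t ∂(volume.restrict (Ioi τ)), ∀ᵐ x ∂μ01,
      ∃ h ∈ heaviside (u t x), r t x = b t * h + ω t * u t x
  dom : ∀ᵐ t ∂(volume.restrict (Ioi τ)), InDomainA (u t) (uxx t)
  eq : ∀ᵐ t ∂(volume.restrict (Ioi τ)), u' t = r t + uxx t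
  fund : ∀ T1 T2 : ℝ, τ < T1 → T1 < T2 →
      IntervalIntegrable u' volume T1 T2 ∧
      ∀ t ∈ Icc T1 T2, u t = u T1 + ∫ s in T1..t, u' s

/-- A strong solution of the inclusion on `[τ,∞)`. -/
def IsStrongSolution (b ω : ℝ → ℝ) (τ : ℝ) (u : ℝ → Hsp) : Prop :=
  ∃ r u' uxx, IsStrongSolutionWith b ω τ u r u' uxx

/-- The solution is non-negative on `[τ,∞)`. -/
def NonnegOn (u : ℝ → Hsp) (τ : ℝ) : Prop :=
  ∀ t, τ ≤ t → ∀ᵐ x ∂μ01, 0 ≤ u t x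

/-- `v` is positive: it has a continuous representative on `[0,1]`
which is strictly positive on `(0,1)`. -/
def IsPositive (v : Hsp) : Prop :=
  ∃ vt : ℝ → ℝ, ContinuousOn vt (Icc 0 1) ∧ (∀ᵐ x ∂μ01, vt x = v x) ∧
    ∀ x ∈ Ioo (0:ℝ) 1, 0 < vt x


/-- Fourier sine coefficient of `v`. -/
def sinCoeff (v : Hsp) (n : ℕ) : ℝ :=
  ∫ x in (0:ℝ)..1, v x * Real.sin (((n : ℝ) + 1) * Real.pi * x)

/-- `v ∈ V^{2r} = D(A^r)`, characterized through the eigenfunction expansion. -/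
def MemV2r (r : ℝ) (v : Hsp) : Prop :=
  Summable (fun n : ℕ => ((((n : ℝ) + 1) * Real.pi) ^ (4 * r)) * (sinCoeff v n) ^ 2)

/-- The square of the `V^{2r} = D(A^r)` distance between `v` and `w`. -/
def V2rDistSq (r : ℝ) (v w : Hsp) : ENNReal :=
  ∑' n : ℕ, ENNReal.ofReal (((((n : ℝ) + 1) * Real.pi) ^ (4 * r)) * (sinCoeff (v - w) n) ^ 2)

/-- The multivalued process generated by problem (Incl) applied to a set:
`U(t,s,S) = {u(t) : u ∈ 𝒟ₛ(x), x ∈ S}`. -/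
def procU (b ω : ℝ → ℝ) (t s : ℝ) (S : Set Hsp) : Set Hsp :=
  {y | ∃ u : ℝ → Hsp, u s ∈ S ∧ IsStrongSolution b ω s u ∧ y = u t}

/-- A family of sets is pullback attracting for the process. -/
def PullbackAttracting (b ω : ℝ → ℝ) (K : ℝ → Set Hsp) : Prop :=
  ∀ t : ℝ, ∀ B : Set Hsp, Bornology.IsBounded B → ∀ ε > (0:ℝ),
    ∃ S : ℝ, S ≤ t ∧ ∀ s ≤ S, ∀ y ∈ procU b ω t s B, ∃ a ∈ K t, ‖y - a‖ < ε

/-- `{𝒜(t)}` is the compact strictly invariant pullback attractor of the process: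
compact sections, strict invariance, pullback attraction and minimality. -/
structure IsPullbackAttractor (b ω : ℝ → ℝ) (𝒜 : ℝ → Set Hsp) : Prop where
  compact : ∀ t : ℝ, IsCompact (𝒜 t)
  invariant : ∀ t s : ℝ, s ≤ t → procU b ω t s (𝒜 s) = 𝒜 t
  attracting : PullbackAttracting b ω 𝒜
  minimal : ∀ K : ℝ → Set Hsp, (∀ t, IsClosed (K t)) →
    PullbackAttracting b ω K → ∀ t, 𝒜 t ⊆ K t

lemma byparts_ac {w G φ φ' : ℝ → ℝ} {a b : ℝ} (hab : a ≤ b)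
    (hw : IntervalIntegrable w volume a b)
    (hG : ∀ x ∈ Icc a b, G x = G a + ∫ z in a..x, w z)
    (hφ : ContDiff ℝ 1 φ) (hφ' : ∀ x, HasDerivAt φ (φ' x) x) :
    ∫ x in a..b, w x * φ x = G b * φ b - G a * φ a - ∫ x in a..b, G x * φ' x := by
  have hac : AbsolutelyContinuousOnInterval (fun x => ∫ z in a..x, w z) a b :=
    hw.absolutelyContinuousOnInterval_intervalIntegral (by simp)
  have hφac : AbsolutelyContinuousOnInterval φ a b :=
    hφ.contDiffOn.absolutelyContinuousOnInterval
  have hd : deriv φ = φ' := funext fun x => (hφ' x).deriv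
  have hφc : Continuous φ' := by rw [← hd]; exact hφ.continuous_deriv le_rfl
  have h := AbsolutelyContinuousOnInterval.integral_mul_deriv_eq_deriv_mul hac hφac
  have e1 : ∫ x in a..b, deriv (fun x => ∫ z in a..x, w z) x * φ x = ∫ x in a..b, w x * φ x := by
    apply intervalIntegral.integral_congr_ae
    filter_upwards [hw.ae_hasDerivAt_integral] with x hx hx2
    rw [(hx (uIoc_subset_uIcc hx2) a (by simp)).deriv]
  have e2 : ∫ x in a..b, G x * φ' x = ∫ x in a..b, (G a * φ' x + (∫ z in a..x, w z) * deriv φ x) := by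
    apply intervalIntegral.integral_congr
    intro x hx
    rw [uIcc_of_le hab] at hx
    simp only [hd]
    rw [hG x hx]; ring
  have e3 : ∫ x in a..b, φ' x = φ b - φ a :=
    intervalIntegral.integral_eq_sub_of_hasDerivAt (fun x _ => hφ' x) (hφc.intervalIntegrable _ _)
  rw [e1] at h
  rw [e2, intervalIntegral.integral_add ((hφc.intervalIntegrable _ _).const_mul _)
    (by rw [hd]; exact (hac.continuousOn.mul hφc.continuousOn).intervalIntegrable),
    intervalIntegral.integral_const_mul, e3, h, hG b (right_mem_Icc.2 hab)]
  simp
  ring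

instance : IsProbabilityMeasure μ01 := ⟨by simp [μ01]⟩

lemma int_μ01 (f : ℝ → ℝ) : ∫ x, f x ∂μ01 = ∫ x in (0:ℝ)..1, f x := by
  rw [intervalIntegral.integral_of_le zero_le_one, integral_Ioc_eq_integral_Ioo]; rfl

lemma ii_iff (f : ℝ → ℝ) : IntervalIntegrable f volume 0 1 ↔ Integrable f μ01 := by
  rw [intervalIntegrable_iff_integrableOn_Ioo_of_le zero_le_one]; rfl

def sfun (n : ℕ) (x : ℝ) : ℝ := Real.sin (((n : ℝ) + 1) * Real.pi * x)

lemma sfun_cont (n : ℕ) : Continuous (sfun n) := by unfold sfun; fun_prop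

lemma sfun_memLp (n : ℕ) : MemLp (sfun n) 2 μ01 :=
  MemLp.of_bound (sfun_cont n).aestronglyMeasurable 1
    (Filter.Eventually.of_forall fun x => by simpa [sfun] using Real.abs_sin_le_one _)

def sv (n : ℕ) : Hsp := (sfun_memLp n).toLp

lemma inner_sv (v : Hsp) (n : ℕ) : inner ℝ (sv n) v = sinCoeff v n := by
  rw [L2.inner_def, sinCoeff, ← int_μ01]
  apply integral_congr_ae
  filter_upwards [(sfun_memLp n).coeFn_toLp] with x hx
  change inner ℝ (((sfun_memLp n).toLp) x) (v x) = _
  rw [hx]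
  simp [sfun]

lemma lp_ii (v : Hsp) : IntervalIntegrable v volume 0 1 := by
  rw [ii_iff]
  exact (Lp.memLp v).integrable (by norm_num)

lemma sinCoeff_sv (m n : ℕ) : sinCoeff (sv m) n = if m = n then 1/2 else 0 := by
  have h1 : sinCoeff (sv m) n = ∫ x in (0:ℝ)..1, sfun m x * sfun n x := by
    rw [sinCoeff, ← int_μ01, ← int_μ01]
    apply integral_congr_ae
    filter_upwards [(sfun_memLp m).coeFn_toLp] with x hx
    change ((sfun_memLp m).toLp) x * _ = _
    rw [hx]; rfl
  have h2 : ∀ x, sfun m x * sfun n x = (1/2) * Real.cos (((m:ℝ) - n) * Real.pi * x)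
      - (1/2) * Real.cos (((m:ℝ) + n + 2) * Real.pi * x) := by
    intro x
    have e1 : ((m:ℝ) - n) * Real.pi * x = ((m:ℝ)+1) * Real.pi * x - ((n:ℝ)+1) * Real.pi * x := by ring
    have e2 : ((m:ℝ) + n + 2) * Real.pi * x = ((m:ℝ)+1) * Real.pi * x + ((n:ℝ)+1) * Real.pi * x := by ring
    rw [e1, e2, Real.cos_sub, Real.cos_add]; unfold sfun; ring
  have h3 : ∀ k : ℤ, ∫ x in (0:ℝ)..1, Real.cos ((k:ℝ) * Real.pi * x) = if k = 0 then 1 else 0 := by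
    intro k
    split_ifs with hk
    · simp [hk]
    · have hk' : (k:ℝ) * Real.pi ≠ 0 := mul_ne_zero (by exact_mod_cast hk) Real.pi_ne_zero
      rw [intervalIntegral.integral_comp_mul_left (fun x => Real.cos x) hk']
      simp [Real.sin_int_mul_pi]
  rw [h1]
  simp_rw [h2]
  rw [intervalIntegral.integral_sub (Continuous.intervalIntegrable (by fun_prop) _ _)
    (Continuous.intervalIntegrable (by fun_prop) _ _), intervalIntegral.integral_const_mul,
    intervalIntegral.integral_const_mul]
  have a1 := h3 ((m:ℤ) - n)
  have a2 := h3 ((m:ℤ) + n + 2)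
  push_cast at a1 a2
  rw [a1, a2]
  have : ¬ ((m:ℤ) + n + 2 = 0) := by omega
  by_cases hmn : m = n
  · simp [hmn]; intro h; exfalso; omega
  · have : ¬ ((m:ℤ) - n = 0) := by omega
    simp [*]

def ev (n : ℕ) : Hsp := Real.sqrt 2 • sv n

lemma ev_orth : Orthonormal ℝ ev := by
  rw [orthonormal_iff_ite]
  intro i j
  simp only [ev, inner_smul_left, inner_smul_right, inner_sv, sinCoeff_sv]
  have : Real.sqrt 2 * Real.sqrt 2 = 2 := Real.mul_self_sqrt (by norm_num)
  by_cases h : i = j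
  · simp [h, ← mul_assoc, this]
  · simp [h, Ne.symm h]

lemma inner_ev (v : Hsp) (n : ℕ) : inner ℝ (ev n) v = Real.sqrt 2 * sinCoeff v n := by
  simp [ev, inner_smul_left, inner_sv]

lemma ii_mul_cont (v : Hsp) {g : ℝ → ℝ} (hg : ContinuousOn g (Icc 0 1)) :
    IntervalIntegrable (fun x => v x * g x) volume 0 1 :=
  (lp_ii v).mul_continuousOn (by rwa [uIcc_of_le zero_le_one])

lemma poly_zero (v : Hsp) (hv : ∀ n, sinCoeff v n = 0) (k : ℕ) :
    ∀ n, ∫ x in (0:ℝ)..1, v x * (sfun n x * Real.cos (Real.pi * x) ^ k) = 0 := by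
  induction k with
  | zero => intro n; simpa [sfun, sinCoeff] using hv n
  | succ k ih =>
    intro n
    have key : ∀ n : ℕ, ∀ x, sfun (n+1) x * Real.cos (Real.pi * x) = 
        (1/2) * sfun (n+2) x + (1/2) * sfun n x := by
      intro n x
      unfold sfun
      push_cast
      have e1 : ((n:ℝ)+2+1) * Real.pi * x = ((n:ℝ)+1+1) * Real.pi * x + Real.pi * x := by ring
      have e2 : ((n:ℝ)+1) * Real.pi * x = ((n:ℝ)+1+1) * Real.pi * x - Real.pi * x := by ring
      rw [e1, e2, Real.sin_add, Real.sin_sub]; ring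
    have cc : ∀ n, Continuous (fun x => sfun n x * Real.cos (Real.pi * x) ^ k) := fun n =>
      (sfun_cont n).mul (by fun_prop)
    cases n with
    | zero =>
      have key0 : ∀ x, sfun 0 x * Real.cos (Real.pi * x) = (1/2) * sfun 1 x := by
        intro x
        unfold sfun
        push_cast
        have e1 : ((1:ℝ)+1) * Real.pi * x = 2 * (Real.pi * x) := by ring
        rw [e1, Real.sin_two_mul]; ring_nf
      have : ∀ x, v x * (sfun 0 x * Real.cos (Real.pi * x) ^ (k+1)) = 
          (1/2) * (v x * (sfun 1 x * Real.cos (Real.pi * x) ^ k)) := by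
        intro x
        have := key0 x
        linear_combination (v x * Real.cos (Real.pi * x) ^ k) * this
      simp_rw [this]
      rw [intervalIntegral.integral_const_mul, ih]; simp
    | succ n =>
      have : ∀ x, v x * (sfun (n+1) x * Real.cos (Real.pi * x) ^ (k+1)) = 
          (1/2) * (v x * (sfun (n+2) x * Real.cos (Real.pi * x) ^ k))
          + (1/2) * (v x * (sfun n x * Real.cos (Real.pi * x) ^ k)) := by
        intro x
        have := key n x
        linear_combination (v x * Real.cos (Real.pi * x) ^ k) * this
      simp_rw [this]
      rw [intervalIntegral.integral_add ((ii_mul_cont v (cc _).continuousOn).const_mul _)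
        ((ii_mul_cont v (cc _).continuousOn).const_mul _),
        intervalIntegral.integral_const_mul, intervalIntegral.integral_const_mul, ih, ih]; simp

lemma poly_zero' (v : Hsp) (hv : ∀ n, sinCoeff v n = 0) (p : Polynomial ℝ) :
    ∫ x in (0:ℝ)..1, v x * (sfun 0 x * p.eval (Real.cos (Real.pi * x))) = 0 := by
  induction p using Polynomial.induction_on' with
  | add p q hp hq =>
    simp_rw [Polynomial.eval_add, mul_add]
    rw [intervalIntegral.integral_add, hp, hq, add_zero]
    · exact ii_mul_cont v (((sfun_cont 0).mul (by fun_prop)).continuousOn)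
    · exact ii_mul_cont v (((sfun_cont 0).mul (by fun_prop)).continuousOn)
  | monomial n a =>
    have : ∀ x, v x * (sfun 0 x * (Polynomial.monomial n a).eval (Real.cos (Real.pi * x))) =
        a * (v x * (sfun 0 x * Real.cos (Real.pi * x) ^ n)) := by
      intro x; simp; ring
    simp_rw [this]
    rw [intervalIntegral.integral_const_mul, poly_zero v hv]; simp

lemma cont_zero (v : Hsp) (hv : ∀ n, sinCoeff v n = 0) (f : ℝ → ℝ) (hf : Continuous f) :
    ∫ x in (0:ℝ)..1, v x * (sfun 0 x * f x) = 0 := by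
  set N := ∫ x in (0:ℝ)..1, |v x| with hN
  have hN0 : 0 ≤ N := intervalIntegral.integral_nonneg zero_le_one (fun _ _ => abs_nonneg _)
  rw [← abs_eq_zero]
  apply le_antisymm _ (abs_nonneg _)
  apply le_of_forall_pos_le_add
  intro ε hε
  obtain ⟨p, hp⟩ := exists_polynomial_near_of_continuousOn (-1) 1
    (fun y => f (Real.arccos y / Real.pi)) (by fun_prop) (ε / (N+1)) (by positivity)
  have h0 := poly_zero' v hv p
  have h1 : ∫ x in (0:ℝ)..1, v x * (sfun 0 x * f x) =
      ∫ x in (0:ℝ)..1, v x * (sfun 0 x * (f x - p.eval (Real.cos (Real.pi * x)))) := by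
    simp_rw [mul_sub]
    rw [intervalIntegral.integral_sub, h0, sub_zero]
    · exact ii_mul_cont v (((sfun_cont 0).mul (by fun_prop)).continuousOn)
    · exact ii_mul_cont v (((sfun_cont 0).mul (by fun_prop)).continuousOn)
  rw [h1]
  have h2 : ‖∫ x in (0:ℝ)..1, v x * (sfun 0 x * (f x - p.eval (Real.cos (Real.pi * x))))‖ ≤
      ∫ x in (0:ℝ)..1, |v x| * (ε / (N+1)) := by
    apply intervalIntegral.norm_integral_le_of_norm_le zero_le_one _ ((lp_ii v).abs.mul_const _)
    refine Filter.Eventually.of_forall fun x hx => ?_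
    rw [norm_mul, norm_mul]
    gcongr
    · exact le_rfl
    have hb := hp (Real.cos (Real.pi * x)) (Real.cos_mem_Icc _)
    have hpi := Real.pi_pos
    rw [Real.arccos_cos (by nlinarith [hx.1]) (by nlinarith [hx.2]),
      mul_div_cancel_left₀ _ Real.pi_ne_zero] at hb
    calc ‖sfun 0 x‖ * ‖f x - p.eval (Real.cos (Real.pi * x))‖ ≤ 1 * (ε/(N+1)) := by
          gcongr
          · exact Real.abs_sin_le_one _
          · rw [Real.norm_eq_abs, abs_sub_comm]; exact hb.le
      _ = _ := one_mul _
  rw [Real.norm_eq_abs, intervalIntegral.integral_mul_const, ← hN] at h2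
  rw [zero_add]
  refine h2.trans ?_
  rw [mul_div_assoc', div_le_iff₀ (by positivity)]
  nlinarith

lemma eq_zero_of_coeff (v : Hsp) (hv : ∀ n, sinCoeff v n = 0) : v = 0 := by
  have h := (isOpen_Ioo (a := (0:ℝ)) (b := 1)).ae_eq_zero_of_integral_contDiff_smul_eq_zero
    (f := fun x => v x * sfun 0 x) (μ := volume) ?_ ?_
  · rw [Lp.ext_iff]
    have h2 : ∀ᵐ x ∂μ01, v x * sfun 0 x = 0 := (ae_restrict_iff' measurableSet_Ioo).2 h
    have h3 : ∀ᵐ x ∂μ01, x ∈ Ioo (0:ℝ) 1 := ae_restrict_mem measurableSet_Ioo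
    filter_upwards [h2, h3, Lp.coeFn_zero ℝ 2 μ01] with x hx hx3 hx4
    rw [hx4]
    have : 0 < sfun 0 x := by
      unfold sfun
      have hpi := Real.pi_pos
      apply Real.sin_pos_of_pos_of_lt_pi
      · simp; exact mul_pos hpi hx3.1
      · simp; nlinarith [hx3.2]
    simpa [this.ne'] using hx
  · apply IntegrableOn.locallyIntegrableOn
    have := ii_mul_cont v (sfun_cont 0).continuousOn
    exact (ii_iff _).1 this
  · intro g hg _ hs
    have := cont_zero v hv g hg.continuous
    rw [← int_μ01] at this
    rw [← setIntegral_eq_integral_of_forall_compl_eq_zero (s := Ioo (0:ℝ) 1)]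
    · change ∫ x, g x • (v x * sfun 0 x) ∂μ01 = _
      refine Eq.trans ?_ this
      congr 1; ext x; simp; ring
    · intro x hx
      have : g x = 0 := image_eq_zero_of_notMem_tsupport (fun h => hx (hs h))
      simp [this]

def Bas : HilbertBasis ℕ ℝ Hsp := HilbertBasis.mkOfOrthogonalEqBot ev_orth (by
  rw [Submodule.eq_bot_iff]
  intro v hv
  apply eq_zero_of_coeff
  intro n
  have := (Submodule.mem_orthogonal _ v).1 hv (ev n) (Submodule.subset_span ⟨n, rfl⟩)
  rw [inner_ev] at this
  simpa using this)

lemma Bas_apply (n : ℕ) : Bas n = ev n := by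
  rw [Bas, HilbertBasis.coe_mkOfOrthogonalEqBot]

lemma parseval (v : Hsp) : HasSum (fun n => 2 * (sinCoeff v n)^2) (‖v‖^2) := by
  have := Bas.hasSum_inner_mul_inner v v
  rw [real_inner_self_eq_norm_sq] at this
  have he : (fun n => 2 * (sinCoeff v n)^2) = fun i => inner ℝ v (Bas i) * inner ℝ (Bas i) v := by
    funext n
    rw [Bas_apply, real_inner_comm, inner_ev]
    have : Real.sqrt 2 * Real.sqrt 2 = 2 := Real.mul_self_sqrt (by norm_num)
    linear_combination (-(sinCoeff v n)^2) * this
  rw [he]; exact this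

lemma bessel (v : Hsp) (F : Finset ℕ) : ∑ n ∈ F, 2 * (sinCoeff v n)^2 ≤ ‖v‖^2 :=
  sum_le_hasSum F (fun n _ => by positivity) (parseval v)

lemma exists_coeff (c : ℕ → ℝ) (hc : Summable (fun n => (c n)^2)) : ∃ a : Hsp, ∀ n, sinCoeff a n = c n := by
  have hm : Memℓp (fun n => Real.sqrt 2 * c n) 2 := by
    apply memℓp_gen
    simp only [norm_mul, ENNReal.toReal_ofNat, Real.rpow_ofNat, mul_pow]
    simpa using hc.mul_left 2
  refine ⟨Bas.repr.symm ⟨_, hm⟩, fun n => ?_⟩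
  have h := Bas.repr_apply_apply (Bas.repr.symm ⟨_, hm⟩) n
  rw [LinearIsometryEquiv.apply_symm_apply, Bas_apply, inner_ev] at h
  have h2 : Real.sqrt 2 ≠ 0 := by positivity
  exact (mul_left_cancel₀ h2 h).symm

/-- eigenvalue -/
def lam (n : ℕ) : ℝ := (((n : ℝ) + 1) * Real.pi)^2

lemma dom_coeff {v w : Hsp} (h : InDomainA v w) (n : ℕ) :
    sinCoeff w n = - lam n * sinCoeff v n := by
  obtain ⟨vt, hc, h0, h1, hae, g, hd, hg⟩ := h
  set k := ((n : ℝ) + 1) * Real.pi with hk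
  have hwi := lp_ii w
  set G : ℝ → ℝ := fun x => (g (1/2) - ∫ z in (0:ℝ)..(1/2), w z) + ∫ z in (0:ℝ)..x, w z with hG
  have hsub : ∀ x ∈ Icc (0:ℝ) 1, IntervalIntegrable w volume 0 x := fun x hx =>
    hwi.mono_set (by rw [uIcc_of_le hx.1, uIcc_of_le zero_le_one]; exact Icc_subset_Icc_right hx.2)
  have hGg : ∀ x ∈ Ioo (0:ℝ) 1, G x = g x := by
    intro x hx
    have e := hg x hx (1/2) (by norm_num)
    have e2 := intervalIntegral.integral_interval_sub_left (hsub x ⟨hx.1.le, hx.2.le⟩)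
      (hsub (1/2) (by norm_num))
    simp only [hG]
    linarith
  have hGc : ContinuousOn G (uIcc 0 1) := by
    apply ContinuousOn.add continuousOn_const
    exact (hwi.absolutelyContinuousOnInterval_intervalIntegral (by simp)).continuousOn
  have b1 := byparts_ac (w := w) (G := G) (φ := sfun n) (φ' := fun x => k * Real.cos (k * x))
    zero_le_one hwi (by intro x hx; simp [hG]) (by unfold sfun; fun_prop) (by
      intro x
      have := ((hasDerivAt_id x).const_mul k).sin
      simp only [id, mul_one] at this
      rw [mul_comm k]
      exact this)
  have b2 := intervalIntegral.integral_mul_deriv_eq_deriv_mul_of_hasDerivAt (a := 0) (b := 1)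
    (u := fun x => k * Real.cos (k * x)) (u' := fun x => - k^2 * Real.sin (k*x)) (v := vt) (v' := G)
    (by fun_prop) (by rwa [uIcc_of_le zero_le_one]) (by
      intro x _
      have := (((hasDerivAt_id x).const_mul k).cos).const_mul k
      exact HasDerivAt.congr_deriv this (by simp only [id_eq]; ring)) (by
      intro x hx
      simp at hx
      rw [hGg x hx]; exact hd x hx) (Continuous.intervalIntegrable (by fun_prop) _ _)
      hGc.intervalIntegrable
  have s0 : sfun n 0 = 0 := by simp [sfun]
  have s1 : sfun n 1 = 0 := by
    simp only [sfun, mul_one]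
    exact_mod_cast Real.sin_nat_mul_pi (n+1)
  rw [s0, s1] at b1
  rw [h0, h1] at b2
  have e3 : ∫ x in (0:ℝ)..1, (- k^2 * Real.sin (k*x)) * vt x = - lam n * sinCoeff v n := by
    rw [sinCoeff, ← int_μ01, ← int_μ01, ← integral_const_mul]
    apply integral_congr_ae
    filter_upwards [hae] with x hx
    rw [hx, lam, ← hk]; ring
  have e4 : sinCoeff w n = ∫ x in (0:ℝ)..1, w x * sfun n x := rfl
  have e5 : ∫ x in (0:ℝ)..1, G x * (k * Real.cos (k * x)) = ∫ x in (0:ℝ)..1, (k * Real.cos (k * x)) * G x := by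
    simp_rw [mul_comm]
  rw [e4, b1, e5, b2, e3]; ring

lemma ii_fun_sum {f : ℕ → ℝ → ℝ} {a b : ℝ} (F : Finset ℕ)
    (h : ∀ n ∈ F, IntervalIntegrable (f n) volume a b) :
    IntervalIntegrable (fun x => ∑ n ∈ F, f n x) volume a b := by
  have := IntervalIntegrable.sum F h
  have e : (fun x => ∑ n ∈ F, f n x) = ∑ n ∈ F, f n := by
    ext x; simp [Finset.sum_apply]
  rw [e]; exact this

lemma sinCoeff_eqL (v : Hsp) (n : ℕ) : sinCoeff v n = innerSL ℝ (sv n) v := by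
  rw [innerSL_apply_apply, inner_sv]

lemma lam_ge (n : ℕ) : Real.pi^2 ≤ lam n := by
  unfold lam
  have := Real.pi_pos
  have hn : (0:ℝ) ≤ n := Nat.cast_nonneg n
  gcongr
  nlinarith

lemma lam_pos (n : ℕ) : 0 < lam n := lt_of_lt_of_le (by have := Real.pi_pos; positivity) (lam_ge n)

lemma ae_Ioc {τ T1 t : ℝ} (h1 : τ < T1) {P : ℝ → Prop} (h : ∀ᵐ s ∂(volume.restrict (Ioi τ)), P s) :
    ∀ᵐ s ∂volume, s ∈ Ioc T1 t → P s := by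
  rw [ae_restrict_iff' measurableSet_Ioi] at h
  filter_upwards [h] with s hs hs2
  exact hs (lt_trans h1 hs2.1)

lemma memLp_sub {b ω : ℝ → ℝ} {τ : ℝ} {u r u' uxx : ℝ → Hsp}
    (h : IsStrongSolutionWith b ω τ u r u' uxx) {T1 t : ℝ} (h1 : τ < T1) (h2 : T1 ≤ t) :
    MemLp r 2 (volume.restrict (Ioc T1 t)) :=
  (h.rmem (t+1) (by linarith)).mono_measure
    (Measure.restrict_mono (show Ioc T1 t ⊆ Ioo τ (t+1) from
      fun x hx => ⟨lt_trans h1 hx.1, by linarith [hx.2]⟩) le_rfl)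

lemma coeff_memLp {b ω : ℝ → ℝ} {τ : ℝ} {u r u' uxx : ℝ → Hsp}
    (h : IsStrongSolutionWith b ω τ u r u' uxx) {T1 t : ℝ} (h1 : τ < T1) (h2 : T1 ≤ t) (n : ℕ) :
    MemLp (fun s => sinCoeff (r s) n) 2 (volume.restrict (Ioc T1 t)) := by
  simp_rw [sinCoeff_eqL]
  exact (innerSL ℝ (sv n)).comp_memLp' (memLp_sub h h1 h2)

lemma coeff_ii {b ω : ℝ → ℝ} {τ : ℝ} {u r u' uxx : ℝ → Hsp}
    (h : IsStrongSolutionWith b ω τ u r u' uxx) {T1 t : ℝ} (h1 : τ < T1) (h2 : T1 ≤ t) (n : ℕ) :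
    IntervalIntegrable (fun s => sinCoeff (r s) n) volume T1 t := by
  rw [intervalIntegrable_iff_integrableOn_Ioc_of_le h2]
  exact (coeff_memLp h h1 h2 n).integrable (by norm_num)

lemma coeffsq_ii {b ω : ℝ → ℝ} {τ : ℝ} {u r u' uxx : ℝ → Hsp}
    (h : IsStrongSolutionWith b ω τ u r u' uxx) {T1 t : ℝ} (h1 : τ < T1) (h2 : T1 ≤ t) (n : ℕ) :
    IntervalIntegrable (fun s => (sinCoeff (r s) n)^2) volume T1 t := by
  rw [intervalIntegrable_iff_integrableOn_Ioc_of_le h2]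
  exact (coeff_memLp h h1 h2 n).integrable_sq

lemma normsq_ii {b ω : ℝ → ℝ} {τ : ℝ} {u r u' uxx : ℝ → Hsp}
    (h : IsStrongSolutionWith b ω τ u r u' uxx) {T1 t : ℝ} (h1 : τ < T1) (h2 : T1 ≤ t) :
    IntervalIntegrable (fun s => ‖r s‖^2) volume T1 t := by
  rw [intervalIntegrable_iff_integrableOn_Ioc_of_le h2]
  exact (memLp_sub h h1 h2).norm.integrable_sq

lemma ucoeff_cont {b ω : ℝ → ℝ} {τ : ℝ} {u r u' uxx : ℝ → Hsp}
    (h : IsStrongSolutionWith b ω τ u r u' uxx) (n : ℕ) :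
    ContinuousOn (fun s => sinCoeff (u s) n) (Ici τ) := by
  simp_rw [sinCoeff_eqL]
  exact (innerSL ℝ (sv n)).continuous.comp_continuousOn h.cont

lemma duhamel {b ω : ℝ → ℝ} {τ : ℝ} {u r u' uxx : ℝ → Hsp}
    (h : IsStrongSolutionWith b ω τ u r u' uxx) {T1 t : ℝ} (h1 : τ < T1) (h2 : T1 ≤ t) (n : ℕ) :
    Real.exp (lam n * t) * sinCoeff (u t) n = Real.exp (lam n * T1) * sinCoeff (u T1) n +
      ∫ s in T1..t, Real.exp (lam n * s) * sinCoeff (r s) n := by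
  rcases h2.eq_or_lt with rfl | h2'
  · simp
  obtain ⟨hi, hf⟩ := h.fund T1 t h1 h2'
  have hw : IntervalIntegrable (fun s => sinCoeff (u' s) n) volume T1 t := by
    simp_rw [sinCoeff_eqL]
    rw [intervalIntegrable_iff] at hi ⊢
    exact (innerSL ℝ (sv n)).integrable_comp hi
  have hG : ∀ x ∈ Icc T1 t, sinCoeff (u x) n = sinCoeff (u T1) n + ∫ s in T1..x, sinCoeff (u' s) n := by
    intro x hx
    have e := hf x hx
    have hix : IntervalIntegrable u' volume T1 x := hi.mono_set (by
      rw [uIcc_of_le hx.1, uIcc_of_le h2]; exact Icc_subset_Icc_right hx.2)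
    simp_rw [sinCoeff_eqL]
    rw [ContinuousLinearMap.intervalIntegral_comp_comm _ hix, ← map_add, ← e]
  have hp := byparts_ac (w := fun s => sinCoeff (u' s) n) (G := fun s => sinCoeff (u s) n)
    (φ := fun s => Real.exp (lam n * s)) (φ' := fun s => lam n * Real.exp (lam n * s)) h2 hw hG
    (by fun_prop) (by
      intro x
      have := ((hasDerivAt_id x).const_mul (lam n)).exp
      exact HasDerivAt.congr_deriv this (by simp only [id_eq]; ring))
  have hcu : ContinuousOn (fun s => sinCoeff (u s) n) (uIcc T1 t) :=
    (ucoeff_cont h n).mono (by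
      rw [uIcc_of_le h2]; intro x hx; exact (lt_of_lt_of_le h1 hx.1).le)
  have hii : IntervalIntegrable (fun s => sinCoeff (u s) n * (lam n * Real.exp (lam n * s))) volume T1 t :=
    (hcu.mul (by fun_prop)).intervalIntegrable
  have hri : IntervalIntegrable (fun s => Real.exp (lam n * s) * sinCoeff (r s) n) volume T1 t :=
    (coeff_ii h h1 h2 n).continuousOn_mul (by fun_prop)
  have he : ∫ s in T1..t, sinCoeff (u' s) n * Real.exp (lam n * s) =
      ∫ s in T1..t, (Real.exp (lam n * s) * sinCoeff (r s) n
        - sinCoeff (u s) n * (lam n * Real.exp (lam n * s))) := by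
    apply intervalIntegral.integral_congr_ae
    rw [uIoc_of_le h2]
    filter_upwards [ae_Ioc (t := t) h1 h.eq, ae_Ioc (t := t) h1 h.dom] with s hs hd hm
    have e2 : sinCoeff (u' s) n = sinCoeff (r s) n - lam n * sinCoeff (u s) n := by
      rw [hs hm]
      have := dom_coeff (hd hm) n
      rw [sinCoeff_eqL, map_add, ← sinCoeff_eqL, ← sinCoeff_eqL, this]; ring
    rw [e2]; ring
  rw [he, intervalIntegral.integral_sub hri hii] at hp
  linarith

lemma jensen {b ω : ℝ → ℝ} {τ : ℝ} {u r u' uxx : ℝ → Hsp}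
    (h : IsStrongSolutionWith b ω τ u r u' uxx) {T1 t : ℝ} (h1 : τ < T1) (h2 : T1 ≤ t) (n : ℕ) :
    (sinCoeff (u t) n)^2 ≤ Real.exp (-lam n * (t - T1)) * (sinCoeff (u T1) n)^2 +
      (1 / lam n) * ∫ s in T1..t, Real.exp (-lam n * (t - s)) * (sinCoeff (r s) n)^2 := by
  have hl := lam_pos n
  set L := lam n with hL
  set m := sinCoeff (u t) n with hm
  have hk : Continuous (fun s => Real.exp (-L * (t - s))) := by fun_prop
  have d := duhamel h h1 h2 n
  rw [← hL, ← hm] at d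
  have dm : m = Real.exp (-L * (t - T1)) * sinCoeff (u T1) n +
      ∫ s in T1..t, Real.exp (-L * (t - s)) * sinCoeff (r s) n := by
    have e1 : ∀ s, Real.exp (-L * (t - s)) = Real.exp (-(L * t)) * Real.exp (L * s) := by
      intro s; rw [← Real.exp_add]; ring_nf
    simp_rw [e1, mul_assoc]
    rw [intervalIntegral.integral_const_mul, ← mul_add, ← d, ← mul_assoc, ← Real.exp_add]
    simp
  have ik : ∫ s in T1..t, Real.exp (-L * (t - s)) = (1 - Real.exp (-L * (t - T1))) / L := by
    have := intervalIntegral.integral_eq_sub_of_hasDerivAt (a := T1) (b := t)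
      (f := fun s => Real.exp (-L * (t - s)) / L) (f' := fun s => Real.exp (-L * (t - s))) (by
        intro x _
        have := ((((hasDerivAt_id x).const_sub t).const_mul (-L)).exp).div_const L
        refine HasDerivAt.congr_deriv this ?_
        simp only [id_eq]; field_simp) (hk.intervalIntegrable _ _)
    rw [this]; simp; ring
  have i1 : IntervalIntegrable (fun s => Real.exp (-L * (t - s)) * sinCoeff (r s) n) volume T1 t :=
    (coeff_ii h h1 h2 n).continuousOn_mul hk.continuousOn
  have i2 : IntervalIntegrable (fun s => Real.exp (-L * (t - s)) * (sinCoeff (r s) n)^2) volume T1 t :=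
    (coeffsq_ii h h1 h2 n).continuousOn_mul hk.continuousOn
  have i0 : IntervalIntegrable (fun s => Real.exp (-L * (t - s))) volume T1 t := hk.intervalIntegrable _ _
  have pos : 0 ≤ ∫ s in T1..t, Real.exp (-L * (t - s)) * (sinCoeff (r s) n - L * m)^2 :=
    intervalIntegral.integral_nonneg h2 (fun s _ => by positivity)
  have ex : ∫ s in T1..t, Real.exp (-L * (t - s)) * (sinCoeff (r s) n - L * m)^2 =
      (∫ s in T1..t, Real.exp (-L * (t - s)) * (sinCoeff (r s) n)^2)
      - 2 * L * m * (∫ s in T1..t, Real.exp (-L * (t - s)) * sinCoeff (r s) n)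
      + L^2 * m^2 * (∫ s in T1..t, Real.exp (-L * (t - s))) := by
    rw [← intervalIntegral.integral_const_mul, ← intervalIntegral.integral_const_mul,
      ← intervalIntegral.integral_sub i2 (i1.const_mul _),
      ← intervalIntegral.integral_add (i2.sub (i1.const_mul _)) (i0.const_mul _)]
    congr 1; ext s; ring
  set E := Real.exp (-L * (t - T1)) with hE
  set I1 := ∫ s in T1..t, Real.exp (-L * (t - s)) * sinCoeff (r s) n
  set I2 := ∫ s in T1..t, Real.exp (-L * (t - s)) * (sinCoeff (r s) n)^2
  set c := sinCoeff (u T1) n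
  have hEp : 0 < E := Real.exp_pos _
  rw [ex, ik] at pos
  have p2 : 0 ≤ E * (c - m)^2 := by positivity
  have hI1 : I1 = m - E * c := by linarith
  rw [hI1] at pos
  have e3 : L^2 * m^2 * ((1 - E) / L) = L * (m^2 * (1-E)) := by field_simp
  rw [e3] at pos
  have e4 : 0 ≤ (1/L) * (I2 - 2 * L * m * (m - E * c) + L * (m^2 * (1-E))) := by positivity
  have e5 : (1/L) * (I2 - 2 * L * m * (m - E * c) + L * (m^2 * (1-E))) =
    (1/L) * I2 - 2 * m * (m - E * c) + m^2 * (1-E) := by field_simp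
  rw [e5] at e4
  nlinarith

lemma normsq_eq (v : Hsp) : ‖v‖^2 = ∫ x, (v x)^2 ∂μ01 := by
  rw [← real_inner_self_eq_norm_sq, L2.inner_def]
  congr 1; ext x; simp

lemma r_bound {b ω : ℝ → ℝ} {b0 b1 ω0 ω1 : ℝ} (hC : Cond1 b ω b0 b1 ω0 ω1)
    (hω1 : ω1 < Real.pi ^ 2) : ∃ C θ : ℝ, 0 ≤ C ∧ 0 ≤ θ ∧ θ < (Real.pi^2)^2 ∧
    ∀ (t : ℝ) (v w : Hsp), (∀ᵐ x ∂μ01, ∃ h ∈ heaviside (v x), w x = b t * h + ω t * v x) →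
      ‖w‖^2 ≤ C + θ * ‖v‖^2 := by
  have hω0 : 0 ≤ ω1 := hC.ω0nonneg.trans ((hC.ωlb 0).trans (hC.ωub 0))
  have hb1 : 0 ≤ b1 := hC.b0pos.le.trans ((hC.blb 0).trans (hC.bub 0))
  have hsq : ω1^2 < (Real.pi^2)^2 := by gcongr
  set η := ((Real.pi^2)^2 - ω1^2)/2 with hη
  have hηp : 0 < η := by linarith
  refine ⟨b1^2 + b1^2*ω1^2/η, ω1^2 + η, by positivity, by positivity, by linarith, ?_⟩
  intro t v w hvw
  rw [normsq_eq, normsq_eq]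
  have iv : Integrable (fun x => (v x)^2) μ01 := (Lp.memLp v).integrable_sq
  have iw : Integrable (fun x => (w x)^2) μ01 := (Lp.memLp w).integrable_sq
  have e : ∫ x, ((b1^2 + b1^2*ω1^2/η) + (ω1^2 + η) * (v x)^2) ∂μ01 =
      (b1^2 + b1^2*ω1^2/η) + (ω1^2 + η) * ∫ x, (v x)^2 ∂μ01 := by
    rw [integral_add (integrable_const _) (iv.const_mul _), integral_const_mul]
    simp
  rw [← e]
  apply integral_mono_ae iw ((integrable_const _).add (iv.const_mul _))
  filter_upwards [hvw] with x hx
  obtain ⟨h, hh, hw⟩ := hx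
  have hh1 : |h| ≤ 1 := by
    unfold heaviside at hh
    split_ifs at hh
    · rw [mem_singleton_iff] at hh; simp [hh]
    · rw [abs_le]; exact hh
    · rw [mem_singleton_iff] at hh; simp [hh]
  have hbt : 0 ≤ b t := hC.b0pos.le.trans (hC.blb t)
  have hωt : 0 ≤ ω t := hC.ω0nonneg.trans (hC.ωlb t)
  have hw1 : |w x| ≤ b1 + ω1 * |v x| := by
    rw [hw]
    calc |b t * h + ω t * v x| ≤ |b t * h| + |ω t * v x| := abs_add_le _ _
      _ = b t * |h| + ω t * |v x| := by rw [abs_mul, abs_mul, abs_of_nonneg hbt, abs_of_nonneg hωt]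
      _ ≤ b1 * 1 + ω1 * |v x| := by
        gcongr
        · exact hC.bub t
        · exact hC.ωub t
      _ = _ := by ring
  have hw2 : (w x)^2 ≤ (b1 + ω1 * |v x|)^2 := by
    rw [← sq_abs]; gcongr
  refine hw2.trans ?_
  change _ ≤ (b1^2 + b1^2*ω1^2/η) + (ω1^2 + η) * (v x)^2
  rw [← sq_abs (v x)]
  set a := |v x|
  have : 0 ≤ (1/η) * (η * a - b1 * ω1)^2 := by positivity
  have e2 : (1/η) * (η * a - b1 * ω1)^2 = η * a^2 - 2 * a * b1 * ω1 + b1^2*ω1^2/η := by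
    field_simp; ring
  nlinarith

lemma energy {b ω : ℝ → ℝ} {τ : ℝ} {u r u' uxx : ℝ → Hsp}
    (h : IsStrongSolutionWith b ω τ u r u' uxx) {T1 t : ℝ} (h1 : τ < T1) (h2 : T1 ≤ t) :
    ‖u t‖^2 ≤ Real.exp (-Real.pi^2 * (t - T1)) * ‖u T1‖^2 +
      (1 / Real.pi^2) * ∫ s in T1..t, Real.exp (-Real.pi^2 * (t - s)) * ‖r s‖^2 := by
  have hpi : 0 < Real.pi^2 := by have := Real.pi_pos; positivity
  refine hasSum_le_of_sum_le (parseval (u t)) fun F => ?_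
  have hk : ∀ c : ℝ, Continuous (fun s => Real.exp (-c * (t - s))) := fun c => by fun_prop
  have step : ∀ n ∈ F, 2 * (sinCoeff (u t) n)^2 ≤ 
      Real.exp (-Real.pi^2 * (t - T1)) * (2 * (sinCoeff (u T1) n)^2) + (1 / Real.pi^2) *
       ∫ s in T1..t, Real.exp (-Real.pi^2 * (t - s)) * (2 * (sinCoeff (r s) n)^2) := by
    intro n _
    have j := jensen h h1 h2 n
    have hl := lam_pos n
    have hg := lam_ge n
    have m1 : Real.exp (-lam n * (t - T1)) ≤ Real.exp (-Real.pi^2 * (t - T1)) := by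
      apply Real.exp_le_exp.2
      nlinarith
    have m2 : ∫ s in T1..t, Real.exp (-lam n * (t - s)) * (sinCoeff (r s) n)^2 ≤
        ∫ s in T1..t, Real.exp (-Real.pi^2 * (t - s)) * (sinCoeff (r s) n)^2 := by
      apply intervalIntegral.integral_mono_on h2
        ((coeffsq_ii h h1 h2 n).continuousOn_mul (hk _).continuousOn)
        ((coeffsq_ii h h1 h2 n).continuousOn_mul (hk _).continuousOn)
      intro s hs
      gcongr
      linarith [hs.2]
    have m3 : 0 ≤ ∫ s in T1..t, Real.exp (-Real.pi^2 * (t - s)) * (sinCoeff (r s) n)^2 :=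
      intervalIntegral.integral_nonneg h2 (fun s _ => by positivity)
    have e : ∫ s in T1..t, Real.exp (-Real.pi^2 * (t - s)) * (2 * (sinCoeff (r s) n)^2) =
        2 * ∫ s in T1..t, Real.exp (-Real.pi^2 * (t - s)) * (sinCoeff (r s) n)^2 := by
      rw [← intervalIntegral.integral_const_mul]; congr 1; ext s; ring
    rw [e]
    have m4 : (1 / lam n) * ∫ s in T1..t, Real.exp (-lam n * (t - s)) * (sinCoeff (r s) n)^2 ≤
       (1 / Real.pi^2) * ∫ s in T1..t, Real.exp (-Real.pi^2 * (t - s)) * (sinCoeff (r s) n)^2 :=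
      mul_le_mul (one_div_le_one_div_of_le hpi hg) m2
        (intervalIntegral.integral_nonneg h2 (fun s _ => by positivity)) (by positivity)
    have m5 := mul_le_mul_of_nonneg_right m1 (sq_nonneg (sinCoeff (u T1) n))
    linarith
  refine (Finset.sum_le_sum step).trans ?_
  rw [Finset.sum_add_distrib, ← Finset.mul_sum, ← Finset.mul_sum (f := fun n => ∫ s in T1..t,
      Real.exp (-Real.pi^2 * (t - s)) * (2 * (sinCoeff (r s) n)^2)),
    ← intervalIntegral.integral_finsetSum (fun n _ =>
      ((coeffsq_ii h h1 h2 n).const_mul 2).continuousOn_mul (hk (Real.pi^2)).continuousOn)]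
  gcongr
  · exact bessel _ _
  · apply intervalIntegral.integral_mono_on h2
    · exact ii_fun_sum F (fun n _ => ((coeffsq_ii h h1 h2 n).const_mul 2).continuousOn_mul (hk (Real.pi^2)).continuousOn)
    · exact (normsq_ii h h1 h2).continuousOn_mul (hk _).continuousOn
    intro s _
    rw [← Finset.mul_sum]
    gcongr
    exact bessel _ _

lemma gron {y : ℝ → ℝ} (hy : Continuous y) {p q C a t : ℝ} (hat : a ≤ t) (hqp : q < p)
    (hq : 0 ≤ q) (hC : 0 ≤ C)
    (h : ∀ x, a ≤ x → y x ≤ Real.exp (-p * (x - a)) * y a +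
      ∫ s in a..x, Real.exp (-p * (x - s)) * (C + q * y s)) :
    y t ≤ Real.exp (-(p - q) * (t - a)) * y a + C / (p - q) := by
  set g : ℝ → ℝ := fun s => Real.exp (p * s) * (C + q * y s) with hg
  have hgc : Continuous g := by fun_prop
  set F : ℝ → ℝ := fun x => Real.exp (p * a) * y a + ∫ s in a..x, g s with hF
  have hF' : ∀ x, HasDerivAt F (g x) x := fun x =>
    (intervalIntegral.integral_hasDerivAt_right (hgc.intervalIntegrable _ _)
      (hgc.stronglyMeasurableAtFilter _ _) hgc.continuousAt).const_add _
  have h' : ∀ x, a ≤ x → Real.exp (p * x) * y x ≤ F x := by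
    intro x hx
    have e := h x hx
    have e1 : ∀ s, Real.exp (-p * (x - s)) = Real.exp (-(p * x)) * Real.exp (p * s) := by
      intro s; rw [← Real.exp_add]; ring_nf
    simp_rw [e1, mul_assoc] at e
    rw [intervalIntegral.integral_const_mul, ← mul_add] at e
    have e2 := mul_le_mul_of_nonneg_left e (Real.exp_pos (p * x)).le
    rw [← mul_assoc, ← Real.exp_add] at e2
    simpa using e2
  have hd : 0 < p - q := by linarith
  set G : ℝ → ℝ := fun x => Real.exp (-q * x) * F x - C / (p - q) * Real.exp ((p - q) * x) with hG
  have hG' : ∀ x, HasDerivAt G (Real.exp (-q * x) * (g x - q * F x) - C * Real.exp ((p-q) * x)) x := by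
    intro x
    have d1 := (((hasDerivAt_id x).const_mul (-q)).exp).mul (hF' x)
    have d2 := (((hasDerivAt_id x).const_mul (p-q)).exp).const_mul (C / (p-q))
    refine HasDerivAt.congr_deriv (d1.sub d2) ?_
    simp only [id_eq]; field_simp; ring
  have hanti : AntitoneOn G (Ici a) := by
    apply antitoneOn_of_hasDerivWithinAt_nonpos (convex_Ici a)
      (fun x _ => (hG' x).continuousAt.continuousWithinAt) (fun x _ => (hG' x).hasDerivWithinAt)
    intro x hx
    rw [interior_Ici] at hx
    have k := h' x (le_of_lt hx)
    have e : Real.exp ((p-q) * x) = Real.exp (-q * x) * Real.exp (p * x) := by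
      rw [← Real.exp_add]; ring_nf
    rw [e]
    have : Real.exp (-q * x) * (g x - q * F x) - C * (Real.exp (-q * x) * Real.exp (p * x)) = 
      - (Real.exp (-q * x) * (q * (F x - Real.exp (p * x) * y x))) := by
      simp only [hg]; ring
    rw [this, Left.neg_nonpos_iff]
    have : 0 ≤ F x - Real.exp (p * x) * y x := by linarith
    positivity
  have k := hanti (self_mem_Ici (a := a)) hat hat
  have k2 := h' t hat
  have Fa : F a = Real.exp (p * a) * y a := by simp [hF]
  simp only [hG, Fa] at k
  have k3 : y t ≤ Real.exp (-(p * t)) * F t := by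
    have := mul_le_mul_of_nonneg_left k2 (Real.exp_pos (-(p * t))).le
    rw [← mul_assoc, ← Real.exp_add] at this
    simpa using this
  refine k3.trans ?_
  have k4 := mul_le_mul_of_nonneg_left k (Real.exp_pos (-(p - q) * t)).le
  have x1 : Real.exp (-(p - q) * t) * Real.exp (-q * t) = Real.exp (-(p * t)) := by
    rw [← Real.exp_add]; ring_nf
  have x2 : Real.exp (-(p - q) * t) * Real.exp ((p - q) * t) = 1 := by
    rw [← Real.exp_add, ← add_mul]; simp
  have x3 : Real.exp (-(p - q) * t) * (Real.exp (-q * a) * Real.exp (p * a)) = Real.exp (-(p - q) * (t - a)) := by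
    rw [← Real.exp_add, ← Real.exp_add]; ring_nf
  have x4 : 0 ≤ Real.exp (-(p - q) * t) * (C / (p - q) * Real.exp ((p - q) * a)) := by positivity
  have l1 : Real.exp (-(p - q) * t) * (Real.exp (-q * t) * F t - C / (p - q) * Real.exp ((p - q) * t)) =
     Real.exp (-(p * t)) * F t - C / (p - q) := by
    linear_combination F t * x1 - C / (p-q) * x2
  have l2 : Real.exp (-(p - q) * t) * (Real.exp (-q * a) * (Real.exp (p * a) * y a) - C / (p - q) * Real.exp ((p - q) * a)) =
     Real.exp (-(p - q) * (t - a)) * y a - Real.exp (-(p - q) * t) * (C / (p - q) * Real.exp ((p - q) * a)) := by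
    linear_combination y a * x3
  rw [l1, l2] at k4
  linarith

lemma absorb {b ω : ℝ → ℝ} {b0 b1 ω0 ω1 : ℝ} (hC : Cond1 b ω b0 b1 ω0 ω1)
    (hω1 : ω1 < Real.pi ^ 2) : ∃ K δ : ℝ, 0 ≤ K ∧ 0 < δ ∧
    ∀ (τ : ℝ) (u : ℝ → Hsp), IsStrongSolution b ω τ u → ∀ t, τ ≤ t →
      ‖u t‖^2 ≤ Real.exp (-δ * (t - τ)) * ‖u τ‖^2 + K := by
  obtain ⟨C, θ, hC0, hθ0, hθ, hr⟩ := r_bound hC hω1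
  have hpi : 0 < Real.pi^2 := by have := Real.pi_pos; positivity
  set p := Real.pi^2 with hp
  have hqp : θ / p < p := by rw [div_lt_iff₀ hpi]; nlinarith
  have hd : 0 < p - θ / p := by linarith
  refine ⟨(C/p) / (p - θ/p), p - θ/p, by positivity, hd, ?_⟩
  rintro τ u ⟨r, u', uxx, h⟩ t ht
  rcases ht.eq_or_lt with rfl | ht'
  · simp; positivity
  have key : ∀ T1 ∈ Ioc τ t, ‖u t‖^2 ≤ Real.exp (-(p - θ/p) * (t - T1)) * ‖u T1‖^2 + (C/p) / (p - θ/p) := by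
    intro T1 hT
    have hyc : Continuous (fun x => ‖u (max x T1)‖^2) := by
      have : Continuous (fun x => u (max x T1)) :=
        h.cont.comp_continuous (by fun_prop) (fun x => hT.1.le.trans (le_max_right _ _))
      exact this.norm.pow 2
    have := gron hyc hT.2 hqp (by positivity) (by positivity : 0 ≤ C/p) (a := T1) ?_
    · simpa [max_eq_left hT.2] using this
    intro x hx
    simp only [max_eq_left hx, max_self]
    refine (energy h hT.1 hx).trans ?_
    rw [← hp, ← intervalIntegral.integral_const_mul]
    have hk : Continuous (fun s => Real.exp (-p * (x - s))) := by fun_prop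
    gcongr
    apply intervalIntegral.integral_mono_ae_restrict hx
    · exact ((normsq_ii h hT.1 hx).continuousOn_mul hk.continuousOn).const_mul _
    · exact Continuous.intervalIntegrable (by fun_prop) _ _
    · have := ae_Ioc (t := x) hT.1 h.sel
      rw [Filter.EventuallyLE, ae_restrict_iff' measurableSet_Icc]
      filter_upwards [this, Measure.ae_ne volume T1] with s hs hne hm
      have hm' : s ∈ Ioc T1 x := ⟨lt_of_le_of_ne hm.1 (Ne.symm hne), hm.2⟩
      have e := hr s (u s) (r s) (hs hm')
      rw [max_eq_left hm.1]
      calc 1/p * (Real.exp (-p * (x - s)) * ‖r s‖^2) ≤ 1/p * (Real.exp (-p * (x - s)) * (C + θ * ‖u s‖^2)) := by gcongr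
        _ = _ := by field_simp
  have hcw : ContinuousWithinAt u (Ioi τ) τ :=
    (h.cont τ self_mem_Ici).mono Ioi_subset_Ici_self
  have lim : Filter.Tendsto (fun T1 => Real.exp (-(p - θ/p) * (t - T1)) * ‖u T1‖^2 + (C/p) / (p - θ/p))
      (nhdsWithin τ (Ioi τ)) (nhds (Real.exp (-(p - θ/p) * (t - τ)) * ‖u τ‖^2 + (C/p) / (p - θ/p))) := by
    have c1 : ContinuousWithinAt (fun T1 => Real.exp (-(p - θ/p) * (t - T1))) (Ioi τ) τ :=
      Continuous.continuousWithinAt (by fun_prop)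
    exact (c1.mul (hcw.norm.pow 2)).add continuousWithinAt_const
  refine ge_of_tendsto lim ?_
  filter_upwards [Ioc_mem_nhdsGT ht'] with T1 hT using key T1 hT

lemma attr_bdd {b ω : ℝ → ℝ} {b0 b1 ω0 ω1 : ℝ} (hC : Cond1 b ω b0 b1 ω0 ω1)
    (hω1 : ω1 < Real.pi ^ 2) (𝒜 : ℝ → Set Hsp) (hattr : IsPullbackAttractor b ω 𝒜) :
    ∃ R : ℝ, 0 ≤ R ∧ ∀ t, ∀ v ∈ 𝒜 t, ‖v‖^2 ≤ R := by
  obtain ⟨K, δ, hK, hδ, hab⟩ := absorb hC hω1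
  refine ⟨K + 1, by positivity, ?_⟩
  have hm := hattr.minimal (fun _ => Metric.closedBall 0 (Real.sqrt (K+1)))
    (fun _ => Metric.isClosed_closedBall) ?_
  · intro t v hv
    have := hm t hv
    rw [mem_closedBall_zero_iff] at this
    calc ‖v‖^2 ≤ (Real.sqrt (K+1))^2 := by gcongr
      _ = K + 1 := Real.sq_sqrt (by positivity)
  intro t B hB ε hε
  obtain ⟨M, hM⟩ := hB.exists_norm_le
  have lim : Filter.Tendsto (fun s : ℝ => Real.exp (-δ * (t - s)) * M^2) Filter.atBot (nhds (0 * M^2)) := by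
    apply Filter.Tendsto.mul_const
    apply Real.tendsto_exp_atBot.comp
    have : (fun s : ℝ => -δ * (t - s)) = fun s => δ * s + (-δ * t) := by ext s; ring
    rw [this]
    exact Filter.tendsto_atBot_add_const_right _ _ (Filter.tendsto_id.const_mul_atBot hδ)
  rw [zero_mul] at lim
  have ev1 := lim.eventually (gt_mem_nhds (zero_lt_one))
  obtain ⟨S, hS⟩ := Filter.eventually_atBot.1 ev1
  refine ⟨min S t, min_le_right _ _, ?_⟩
  rintro s hs y ⟨u, hu, hsol, rfl⟩
  refine ⟨u t, ?_, by simpa using hε⟩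
  have h1 := hab s u hsol t (hs.trans (min_le_right _ _))
  have h2 := hS s (hs.trans (min_le_left _ _))
  rw [mem_closedBall_zero_iff]
  apply Real.le_sqrt_of_sq_le
  have h3 : ‖u s‖^2 ≤ M^2 := by gcongr; exact hM _ hu
  have h4 := mul_le_mul_of_nonneg_left h3 (Real.exp_pos (-δ * (t - s))).le
  linarith

lemma rpow_exp {x s : ℝ} (hx : 0 ≤ x) (hs0 : 0 ≤ s) (hs : s ≤ 1) : x ^ s ≤ Real.exp x := by
  have h1 : x + 1 ≤ Real.exp x := Real.add_one_le_exp x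
  calc x ^ s ≤ (x+1)^s := by gcongr; linarith
    _ ≤ (x+1)^(1:ℝ) := Real.rpow_le_rpow_of_exponent_le (by linarith) hs
    _ = x + 1 := Real.rpow_one _
    _ ≤ _ := h1

lemma high_bound {b ω : ℝ → ℝ} {b0 b1 ω0 ω1 : ℝ} (hC : Cond1 b ω b0 b1 ω0 ω1)
    (hω1 : ω1 < Real.pi ^ 2) (𝒜 : ℝ → Set Hsp) (hattr : IsPullbackAttractor b ω 𝒜)
    {ρ : ℝ} (h1 : 1/2 ≤ ρ) (h2 : ρ < 1) :
    ∃ M : ℝ, 0 ≤ M ∧ ∀ v ∈ ⋃ t : ℝ, 𝒜 t, ∀ F : Finset ℕ,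
      ∑ n ∈ F, (((n : ℝ) + 1) * Real.pi) ^ (4 * ρ) * (sinCoeff v n)^2 ≤ M := by
  obtain ⟨C, θ, hC0, hθ0, hθ, hr⟩ := r_bound hC hω1
  obtain ⟨R, hR0, hR⟩ := attr_bdd hC hω1 𝒜 hattr
  set Q := C + θ * R with hQ
  have hQ0 : 0 ≤ Q := by positivity
  have hJ0 : 0 ≤ ∫ x in (0:ℝ)..1, x ^ (1 - 2*ρ) :=
    intervalIntegral.integral_nonneg zero_le_one (fun x hx => Real.rpow_nonneg hx.1 _)
  refine ⟨R + Q * ∫ x in (0:ℝ)..1, x ^ (1 - 2*ρ), by positivity, ?_⟩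
  intro v hv F
  obtain ⟨t, hvt⟩ := mem_iUnion.1 hv
  rw [← hattr.invariant t (t-2) (by linarith)] at hvt
  obtain ⟨u, hu, hsol, rfl⟩ := hvt
  have hmem : ∀ s, t - 2 ≤ s → ‖u s‖^2 ≤ R := fun s hs => by
    apply hR s
    rw [← hattr.invariant s (t-2) hs]
    exact ⟨u, hu, hsol, rfl⟩
  obtain ⟨r, u', uxx, h⟩ := hsol
  have hT1 : t - 2 < t - 1 := by linarith
  have hT2 : t - 1 ≤ t := by linarith
  have hk : ∀ c : ℝ, Continuous (fun s => Real.exp (-c * (t - s))) := fun c => by fun_prop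
  have hlr : ∀ n : ℕ, (((n : ℝ) + 1) * Real.pi) ^ (4 * ρ) = lam n ^ (2 * ρ) := by
    intro n
    have : 0 ≤ ((n : ℝ) + 1) * Real.pi := by have := Real.pi_pos; positivity
    unfold lam
    rw [← Real.rpow_natCast, ← Real.rpow_mul this]
    congr 1; push_cast; ring
  have hii : ∀ n, IntervalIntegrable (fun s => lam n ^ (2*ρ - 1) * Real.exp (-lam n * (t - s)) *
      (sinCoeff (r s) n)^2) volume (t-1) t := fun n =>
    (coeffsq_ii h hT1 hT2 n).continuousOn_mul (continuous_const.mul (hk _)).continuousOn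
  have step : ∀ n ∈ F, (((n : ℝ) + 1) * Real.pi) ^ (4 * ρ) * (sinCoeff (u t) n)^2 ≤
      2 * (sinCoeff (u (t-1)) n)^2 + ∫ s in (t-1)..t, lam n ^ (2*ρ - 1) * Real.exp (-lam n * (t - s)) *
      (sinCoeff (r s) n)^2 := by
    intro n _
    have j := jensen h hT1 hT2 n
    have hl := lam_pos n
    rw [hlr n]
    have hlp : 0 ≤ lam n ^ (2*ρ) := by positivity
    have j2 := mul_le_mul_of_nonneg_left j hlp
    refine j2.trans ?_
    rw [mul_add]
    have hexp : lam n ^ (2*ρ) * Real.exp (-lam n * (t - (t-1))) ≤ 2 := by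
      have e0 : lam n ^ (2*ρ) ≤ lam n ^ (2:ℝ) := by
        apply Real.rpow_le_rpow_of_exponent_le _ (by linarith)
        have := lam_ge n
        nlinarith [Real.pi_gt_three]
      have e1 : lam n ^ 2 ≤ 2 * Real.exp (lam n) := by
        have := Real.quadratic_le_exp_of_nonneg hl.le
        nlinarith
      have e2 : -lam n * (t - (t-1)) = - lam n := by ring
      rw [e2, Real.exp_neg, ← div_eq_mul_inv, div_le_iff₀ (Real.exp_pos _)]
      exact e0.trans (by simpa using e1)
    have e3 : lam n ^ (2*ρ) * ((1 / lam n) * ∫ s in (t-1)..t, Real.exp (-lam n * (t - s)) * (sinCoeff (r s) n)^2)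
        = ∫ s in (t-1)..t, lam n ^ (2*ρ - 1) * Real.exp (-lam n * (t - s)) * (sinCoeff (r s) n)^2 := by
      simp_rw [mul_assoc (lam n ^ (2*ρ - 1))]
      rw [intervalIntegral.integral_const_mul, ← mul_assoc, Real.rpow_sub_one hl.ne', mul_one_div]
    rw [e3, ← mul_assoc]
    gcongr
  refine (Finset.sum_le_sum step).trans ?_
  rw [Finset.sum_add_distrib, ← intervalIntegral.integral_finsetSum (fun n _ => hii n)]
  gcongr
  · exact (bessel _ F).trans (hmem _ (by linarith))
  have hsub : ∫ x in (0:ℝ)..1, x ^ (1 - 2*ρ) = ∫ s in (t-1)..t, (t - s) ^ (1 - 2*ρ) := by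
    rw [intervalIntegral.integral_comp_sub_left (fun x => x ^ (1 - 2*ρ)) t]
    simp
  rw [hsub, ← intervalIntegral.integral_const_mul]
  have hi0 : IntervalIntegrable (fun x : ℝ => x ^ (1 - 2*ρ)) volume 1 0 :=
    intervalIntegral.intervalIntegrable_rpow' (by linarith)
  have hi1 : IntervalIntegrable (fun s : ℝ => (t - s) ^ (1 - 2*ρ)) volume (t-1) t := by
    have := hi0.comp_sub_left t
    simpa using this
  apply intervalIntegral.integral_mono_ae_restrict hT2
    (ii_fun_sum F (fun n _ => hii n)) (hi1.const_mul _)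
  rw [Filter.EventuallyLE, ae_restrict_iff' measurableSet_Icc]
  filter_upwards [ae_Ioc (t := t) hT1 h.sel, Measure.ae_ne volume (t-1), Measure.ae_ne volume t]
    with s hs hne hne2 hm
  have hm' : s ∈ Ioc (t-1) t := ⟨lt_of_le_of_ne hm.1 (Ne.symm hne), hm.2⟩
  have e := hr s (u s) (r s) (hs hm')
  have hpos : 0 < t - s := by
    have := lt_of_le_of_ne hm.2 hne2
    linarith
  have e1 : ‖r s‖^2 ≤ Q := by
    refine e.trans ?_
    rw [hQ]
    gcongr
    exact hmem s (by linarith [hm.1])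
  have e2 : ∀ n ∈ F, lam n ^ (2*ρ - 1) * Real.exp (-lam n * (t - s)) * (sinCoeff (r s) n)^2 ≤
      (t - s) ^ (1 - 2*ρ) * (2 * (sinCoeff (r s) n)^2) := by
    intro n _
    have hl := lam_pos n
    have a := rpow_exp (x := lam n * (t - s)) (s := 2*ρ - 1) (by positivity) (by linarith) (by linarith)
    rw [Real.mul_rpow hl.le hpos.le] at a
    have a2 : lam n ^ (2*ρ - 1) * Real.exp (-lam n * (t - s)) ≤ (t - s) ^ (1 - 2*ρ) := by
      rw [neg_mul, Real.exp_neg, ← div_eq_mul_inv, div_le_iff₀ (Real.exp_pos _)]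
      have a3 : (1 - 2*ρ) = -(2*ρ - 1) := by ring
      rw [a3, Real.rpow_neg hpos.le, inv_mul_eq_div, le_div_iff₀ (by positivity)]
      exact a
    have a4 := mul_le_mul_of_nonneg_right a2 (sq_nonneg (sinCoeff (r s) n))
    have a5 : 0 ≤ (t - s) ^ (1 - 2*ρ) * (sinCoeff (r s) n)^2 := by positivity
    linarith
  refine (Finset.sum_le_sum e2).trans ?_
  rw [← Finset.mul_sum, mul_comm Q]
  gcongr
  exact (bessel _ F).trans e1

lemma sinCoeff_sub (v w : Hsp) (n : ℕ) : sinCoeff (v - w) n = sinCoeff v n - sinCoeff w n := by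
  simp_rw [sinCoeff_eqL, map_sub]

lemma V2r_le {r : ℝ} {v w : Hsp} {M : ℝ}
    (h : ∀ F : Finset ℕ, ∑ n ∈ F, (((n : ℝ) + 1) * Real.pi) ^ (4 * r) * (sinCoeff v n - sinCoeff w n)^2 ≤ M) :
    V2rDistSq r v w ≤ ENNReal.ofReal M := by
  unfold V2rDistSq
  rw [ENNReal.tsum_eq_iSup_sum]
  apply iSup_le
  intro F
  have hpi := Real.pi_pos
  rw [← ENNReal.ofReal_sum_of_nonneg (fun n _ => by positivity)]
  apply ENNReal.ofReal_le_ofReal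
  simp_rw [sinCoeff_sub]
  exact h F

/-- under (Cond1) and `ω₁ < π²`, the union of the sections of the
pullback attractor is relatively compact in `V^{2r}` for every `0 ≤ r < 1`:
it is bounded in `V^{2r}` and every sequence in it has a subsequence converging
in the `V^{2r}` metric. -/
theorem statement12
    (b ω : ℝ → ℝ) (b0 b1 ω0 ω1 : ℝ) (hC : Cond1 b ω b0 b1 ω0 ω1)
    (hω1 : ω1 < Real.pi ^ 2)
    (𝒜 : ℝ → Set Hsp) (hattr : IsPullbackAttractor b ω 𝒜) :
    ∀ r : ℝ, 0 ≤ r → r < 1 →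
      (∀ v ∈ ⋃ t : ℝ, 𝒜 t, MemV2r r v) ∧
      (∃ M : ℝ, ∀ v ∈ ⋃ t : ℝ, 𝒜 t, V2rDistSq r v 0 ≤ ENNReal.ofReal M) ∧
      ∀ f : ℕ → Hsp, (∀ n, f n ∈ ⋃ t : ℝ, 𝒜 t) →
        ∃ a : Hsp, ∃ φ : ℕ → ℕ, StrictMono φ ∧
          Filter.Tendsto (fun n => V2rDistSq r (f (φ n)) a) Filter.atTop (nhds 0) := by
  intro r hr0 hr1
  set ρ := (1 + r)/2 with hρ
  obtain ⟨M, hM0, hM⟩ := high_bound hC hω1 𝒜 hattr (ρ := ρ) (by linarith) (by linarith)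
  have hpi := Real.pi_pos
  have ha1 : ∀ n : ℕ, 1 ≤ ((n : ℝ) + 1) * Real.pi := fun n => by
    have : (0:ℝ) ≤ n := Nat.cast_nonneg n
    nlinarith [Real.pi_gt_three]
  have hle : ∀ n : ℕ, (((n : ℝ) + 1) * Real.pi) ^ (4 * r) ≤ (((n : ℝ) + 1) * Real.pi) ^ (4 * ρ) :=
    fun n => Real.rpow_le_rpow_of_exponent_le (ha1 n) (by linarith)
  have hM' : ∀ v ∈ ⋃ t : ℝ, 𝒜 t, ∀ F : Finset ℕ,
      ∑ n ∈ F, (((n : ℝ) + 1) * Real.pi) ^ (4 * r) * (sinCoeff v n)^2 ≤ M := fun v hv F =>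
    (Finset.sum_le_sum fun n _ => mul_le_mul_of_nonneg_right (hle n) (sq_nonneg _)).trans (hM v hv F)
  have hz : ∀ n, sinCoeff (0 : Hsp) n = 0 := fun n => by rw [sinCoeff_eqL, map_zero]
  refine ⟨fun v hv => ?_, ⟨M, fun v hv => ?_⟩, ?_⟩
  · exact summable_of_sum_le (fun n => by positivity) (hM' v hv)
  · apply V2r_le
    simpa [hz] using hM' v hv
  intro f hf
  have hcb : ∀ v ∈ ⋃ t : ℝ, 𝒜 t, ∀ n, sinCoeff v n ∈ Icc (-(M+1)) (M+1) := by
    intro v hv n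
    have := hM' v hv {n}
    rw [Finset.sum_singleton] at this
    have h1 : 1 ≤ (((n : ℝ) + 1) * Real.pi) ^ (4 * r) := Real.one_le_rpow (ha1 n) (by linarith)
    have h2 : (sinCoeff v n)^2 ≤ M := by nlinarith [sq_nonneg (sinCoeff v n)]
    constructor <;> nlinarith
  have hcomp : IsCompact (Set.pi univ (fun _ : ℕ => Icc (-(M+1)) (M+1))) :=
    isCompact_univ_pi fun _ => isCompact_Icc
  obtain ⟨c, -, φ, hφ, hlim⟩ := hcomp.tendsto_subseq (x := fun k n => sinCoeff (f k) n)
    (fun k n _ => hcb _ (hf k) n)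
  rw [tendsto_pi_nhds] at hlim
  have hcM : ∀ F : Finset ℕ, ∑ n ∈ F, (((n : ℝ) + 1) * Real.pi) ^ (4 * ρ) * (c n)^2 ≤ M := by
    intro F
    have : Filter.Tendsto (fun k => ∑ n ∈ F, (((n : ℝ) + 1) * Real.pi) ^ (4 * ρ) * (sinCoeff (f (φ k)) n)^2)
        Filter.atTop (nhds (∑ n ∈ F, (((n : ℝ) + 1) * Real.pi) ^ (4 * ρ) * (c n)^2)) :=
      tendsto_finsetSum _ fun n _ => ((hlim n).pow 2).const_mul _
    exact le_of_tendsto' this fun k => hM _ (hf _) F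
  have hcs : Summable (fun n => (c n)^2) := by
    refine summable_of_sum_le (c := M) (fun n => by positivity) fun F => ?_
    refine (Finset.sum_le_sum fun n _ => ?_).trans (hcM F)
    have h1 : 1 ≤ (((n : ℝ) + 1) * Real.pi) ^ (4 * ρ) := Real.one_le_rpow (ha1 n) (by linarith)
    nlinarith [sq_nonneg (c n)]
  obtain ⟨a, ha⟩ := exists_coeff c hcs
  refine ⟨a, φ, hφ, ?_⟩
  have hδ : 0 < 4 * (ρ - r) := by linarith
  have hdM : ∀ k (F : Finset ℕ), ∑ n ∈ F, (((n : ℝ) + 1) * Real.pi) ^ (4 * ρ) *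
      (sinCoeff (f (φ k)) n - c n)^2 ≤ 4 * M := by
    intro k F
    have h1 := hM _ (hf (φ k)) F
    have h2 := hcM F
    have : ∑ n ∈ F, (((n : ℝ) + 1) * Real.pi) ^ (4 * ρ) * (sinCoeff (f (φ k)) n - c n)^2 ≤
      ∑ n ∈ F, (2 * ((((n : ℝ) + 1) * Real.pi) ^ (4 * ρ) * (sinCoeff (f (φ k)) n)^2) +
        2 * ((((n : ℝ) + 1) * Real.pi) ^ (4 * ρ) * (c n)^2)) := by
      apply Finset.sum_le_sum
      intro n _
      have : 0 ≤ (((n : ℝ) + 1) * Real.pi) ^ (4 * ρ) * (sinCoeff (f (φ k)) n + c n)^2 := by positivity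
      nlinarith
    rw [Finset.sum_add_distrib, ← Finset.mul_sum, ← Finset.mul_sum] at this
    linarith
  have htail : Filter.Tendsto (fun N : ℕ => (((N : ℝ) + 1) * Real.pi) ^ (-(4 * (ρ - r))) * (4 * M))
      Filter.atTop (nhds (0 * (4 * M))) := by
    apply Filter.Tendsto.mul_const
    apply (tendsto_rpow_neg_atTop hδ).comp
    apply Filter.Tendsto.atTop_mul_const hpi
    exact Filter.tendsto_atTop_add_const_right _ _ tendsto_natCast_atTop_atTop
  rw [zero_mul] at htail
  have main : ∀ N k (F : Finset ℕ), ∑ n ∈ F, (((n : ℝ) + 1) * Real.pi) ^ (4 * r) *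
      (sinCoeff (f (φ k)) n - sinCoeff a n)^2 ≤
      ∑ n ∈ Finset.range N, (((n : ℝ) + 1) * Real.pi) ^ (4 * r) * (sinCoeff (f (φ k)) n - c n)^2 +
      (((N : ℝ) + 1) * Real.pi) ^ (-(4 * (ρ - r))) * (4 * M) := by
    intro N k F
    simp_rw [ha]
    have hNp : 0 ≤ (((N : ℝ) + 1) * Real.pi) ^ (-(4 * (ρ - r))) := by positivity
    rw [← Finset.sum_filter_add_sum_filter_not F (· < N)]
    apply add_le_add
    · apply Finset.sum_le_sum_of_subset_of_nonneg
      · intro n hn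
        simp at hn ⊢
        exact hn.2
      · intro n _ _; positivity
    · refine le_trans ?_ (mul_le_mul_of_nonneg_left (hdM k (F.filter (fun n => ¬ n < N))) hNp)
      rw [Finset.mul_sum]
      apply Finset.sum_le_sum
      intro n hn
      have hNn : N ≤ n := by simp at hn; exact hn.2
      rw [← mul_assoc]
      apply mul_le_mul_of_nonneg_right _ (sq_nonneg _)
      have p1 : (((n : ℝ) + 1) * Real.pi) ^ (4 * r) =
          (((n : ℝ) + 1) * Real.pi) ^ (-(4 * (ρ - r))) * (((n : ℝ) + 1) * Real.pi) ^ (4 * ρ) := by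
        rw [← Real.rpow_add (by positivity)]; congr 1; ring
      rw [p1]
      apply mul_le_mul_of_nonneg_right _ (by positivity)
      apply Real.rpow_le_rpow_of_nonpos (by positivity) _ (by linarith)
      have : (N:ℝ) ≤ n := by exact_mod_cast hNn
      gcongr
  rw [ENNReal.tendsto_nhds_zero]
  intro ε hε
  obtain ⟨e, he0, heε⟩ : ∃ e : ℝ, 0 < e ∧ ENNReal.ofReal e ≤ ε := by
    by_cases ht : ε = ⊤
    · exact ⟨1, one_pos, by simp [ht]⟩
    · exact ⟨ε.toReal, ENNReal.toReal_pos hε.ne' ht, by rw [ENNReal.ofReal_toReal ht]⟩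
  obtain ⟨N, hN⟩ := (htail.eventually (gt_mem_nhds (half_pos he0))).exists
  have hfin : Filter.Tendsto (fun k => ∑ n ∈ Finset.range N, (((n : ℝ) + 1) * Real.pi) ^ (4 * r) *
      (sinCoeff (f (φ k)) n - c n)^2) Filter.atTop
      (nhds (∑ n ∈ Finset.range N, (((n : ℝ) + 1) * Real.pi) ^ (4 * r) * (c n - c n)^2)) :=
    tendsto_finsetSum _ fun n _ => (((hlim n).sub_const _).pow 2).const_mul _
  simp only [sub_self, ne_eq, OfNat.ofNat_ne_zero, not_false_eq_true, zero_pow, mul_zero,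
    Finset.sum_const_zero] at hfin
  filter_upwards [hfin.eventually (gt_mem_nhds (half_pos he0))] with k hk
  refine le_trans ?_ heε
  apply V2r_le
  intro F
  linarith [main N k F]

end
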